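/- Let G = R. Suppose A = A₁ ∪ ⋯ ∪ A_k ⊆ ℝⁿ, where A₁,…,A_k are (m−1)-dimensional closed R-orientable topological manifolds, and suppose every non-empty intersection of the A_i's is also an (m−1)-dimensional closed manifold (equivalently, every connected component of A is contained in some A_i). Then A is an (m−1)-dimensional closed R-orientable manifold, and if for each i = 1,…,k the set X_i is a surface with coboundary ⊇ L^R(A_i) (with respect to A_i), then X = X₁ ∪ ⋯ ∪ X_k is a surface with coboundary ⊇ L^R(A) (with respect to A). -/

import Mathlib

/-!
Formalization background.  Čech cohomology is not available in Mathlib, so we axiomatize it: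
a `CechTheory n R G` provides reduced, unreduced and relative Čech cohomology `R`-modules with
coefficients in the `R`-module `G` for subsets of `ℝⁿ` (with the subspace topology), together
with contravariant functoriality, homotopy invariance, the comparison between reduced and
unreduced cohomology in positive degrees, the natural projection onto reduced cohomology in
degree `0`, the convention `H̃⁰(∅) = 0`, the vanishing of the reduced cohomology of a point,
and the continuity property of Čech cohomology for directed intersections of compact sets.
-/

open Set CategoryTheory MeasureTheory Filter
open scoped ENNReal unitInterval

noncomputable section

/-- Euclidean `n`-space `ℝⁿ`. -/
abbrev Euc (n : ℕ) := EuclideanSpace ℝ (Fin n)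

/-- An axiomatization of Čech cohomology with coefficients in an `R`-module `G` for subsets
of `ℝⁿ` (all subsets carry the subspace topology). -/
structure CechTheory (n : ℕ) (R : Type) [CommRing R] (G : Type) [AddCommGroup G]
    [Module R G] : Type 1 where
  /-- reduced Čech cohomology `H̃ᵏ(A; G)` -/
  Hred : ℕ → Set (Euc n) → ModuleCat.{0} R
  /-- unreduced Čech cohomology `Hᵏ(A; G)` -/
  H : ℕ → Set (Euc n) → ModuleCat.{0} R
  /-- relative Čech cohomology `Hᵏ(X, A; G)` of a pair (used only to express orientability) -/
  Hpair : ℕ → Set (Euc n) → Set (Euc n) → ModuleCat.{0} R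
  /-- the pullback on reduced cohomology induced by a continuous map -/
  mapRed : ∀ (k : ℕ) {A B : Set (Euc n)}, C(A, B) → (Hred k B ⟶ Hred k A)
  /-- the pullback on unreduced cohomology induced by a continuous map -/
  map : ∀ (k : ℕ) {A B : Set (Euc n)}, C(A, B) → (H k B ⟶ H k A)
  mapRed_id : ∀ (k : ℕ) (A : Set (Euc n)), mapRed k (ContinuousMap.id A) = 𝟙 (Hred k A)
  mapRed_comp : ∀ (k : ℕ) {A B C' : Set (Euc n)} (f : C(A, B)) (g : C(B, C')),
    mapRed k (g.comp f) = mapRed k g ≫ mapRed k f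
  map_id : ∀ (k : ℕ) (A : Set (Euc n)), map k (ContinuousMap.id A) = 𝟙 (H k A)
  map_comp : ∀ (k : ℕ) {A B C' : Set (Euc n)} (f : C(A, B)) (g : C(B, C')),
    map k (g.comp f) = map k g ≫ map k f
  /-- homotopy invariance of reduced Čech cohomology -/
  mapRed_homotopic : ∀ (k : ℕ) {A B : Set (Euc n)} (f g : C(A, B)),
    Nonempty (f.Homotopy g) → mapRed k f = mapRed k g
  /-- homotopy invariance of unreduced Čech cohomology -/
  map_homotopic : ∀ (k : ℕ) {A B : Set (Euc n)} (f g : C(A, B)),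
    Nonempty (f.Homotopy g) → map k f = map k g
  /-- in positive degrees, reduced and unreduced Čech cohomology agree -/
  redIso : ∀ (k : ℕ), 0 < k → ∀ A : Set (Euc n), Hred k A ≅ H k A
  redIso_natural : ∀ (k : ℕ) (hk : 0 < k) {A B : Set (Euc n)} (f : C(A, B)),
    mapRed k f ≫ (redIso k hk A).hom = (redIso k hk B).hom ≫ map k f
  /-- in degree `0`, the natural projection of unreduced onto reduced cohomology -/
  projRed : ∀ A : Set (Euc n), H 0 A ⟶ Hred 0 A
  projRed_natural : ∀ {A B : Set (Euc n)} (f : C(A, B)),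
    map 0 f ≫ projRed A = projRed B ≫ mapRed 0 f
  projRed_surjective : ∀ A : Set (Euc n), Function.Surjective (projRed A)
  /-- convention: `H̃⁰(∅) = 0` (hence every map into it, e.g. the one induced by the
  inclusion of `∅` into any set, is zero) -/
  hred_empty_eq_zero : ∀ x : Hred 0 (∅ : Set (Euc n)), x = 0
  /-- the reduced cohomology of a point vanishes in all degrees -/
  hred_point : ∀ (k : ℕ) (p : Euc n) (x : Hred k ({p} : Set (Euc n))), x = 0
  /-- continuity of Čech cohomology: for a (downward) directed family of compact sets, every
  class on the intersection is the restriction of a class on some member of the family -/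
  continuity : ∀ (k : ℕ) (ι : Type) [Nonempty ι] (X : ι → Set (Euc n)),
    (∀ i, IsCompact (X i)) → (∀ i j, ∃ l, X l ⊆ X i ∧ X l ⊆ X j) →
    ∀ x : Hred k (⋂ i, X i), ∃ (i : ι) (y : Hred k (X i)),
      mapRed k ⟨Set.inclusion (Set.iInter_subset X i),
        continuous_inclusion (Set.iInter_subset X i)⟩ y = x

namespace CechTheory

variable {n : ℕ} {R : Type} [CommRing R] {G : Type} [AddCommGroup G] [Module R G]

/-- The pullback `ι(X,A)* : H̃ᵏ(X) → H̃ᵏ(A)` induced by an inclusion `A ⊆ X`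
(reduced Čech cohomology). -/
def res (T : CechTheory n R G) (k : ℕ) {A X : Set (Euc n)} (h : A ⊆ X) :
    T.Hred k X ⟶ T.Hred k A :=
  T.mapRed k ⟨Set.inclusion h, continuous_inclusion h⟩

/-- The pullback `ι(X,A)* : Hᵏ(X) → Hᵏ(A)` induced by an inclusion `A ⊆ X`
(unreduced Čech cohomology). -/
def resH (T : CechTheory n R G) (k : ℕ) {A X : Set (Euc n)} (h : A ⊆ X) :
    T.H k X ⟶ T.H k A :=
  T.map k ⟨Set.inclusion h, continuous_inclusion h⟩

/-- The algebraic coboundary `K*(X,A)` of `X` with respect to `A` (in degree `m-1`):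
the complement in `H̃^{m-1}(A)` of the image of `ι(X,A)*`. -/
def K (T : CechTheory n R G) (m : ℕ) (X A : Set (Euc n)) (h : A ⊆ X) :
    Set (T.Hred (m - 1) A) :=
  {x | x ∉ Set.range (T.res (m - 1) h)}

/-- `X` is a surface with coboundary `⊇ L` with respect to `A`:  `A ⊆ X` and `L` is disjoint
from the image of `ι(X,A)* : H̃^{m-1}(X) → H̃^{m-1}(A)`, i.e. `K*(X,A) ⊇ L`. -/
def IsSurface (T : CechTheory n R G) (m : ℕ) (A X : Set (Euc n))
    (L : Set (T.Hred (m - 1) A)) : Prop :=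
  ∃ h : A ⊆ X, ∀ x ∈ L, x ∉ Set.range (T.res (m - 1) h)

/-- The collection `𝔖(A, U, G, L, m)` of compact sets `X ⊆ U` such that `X ∪ A` is a surface
with coboundary `⊇ L` with respect to `A` and `𝓗^m(X) < ∞`. -/
def Spanning (T : CechTheory n R G) (m : ℕ) (A U : Set (Euc n))
    (L : Set (T.Hred (m - 1) A)) : Set (Set (Euc n)) :=
  {X | X ⊆ U ∧ IsCompact X ∧ T.IsSurface m A (X ∪ A) L ∧ μH[(m : ℝ)] X < ⊤}

end CechTheory

/-- The core `X*` of a set `X` (of Hausdorff dimension `m`): the points `p ∈ X` all of whose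
neighborhoods meet `X` in a set of positive `m`-dimensional Hausdorff measure. -/
def core {n : ℕ} (m : ℕ) (X : Set (Euc n)) : Set (Euc n) :=
  {p | p ∈ X ∧ ∀ r : ℝ, 0 < r → 0 < μH[(m : ℝ)] (X ∩ Metric.ball p r)}

/-- `p` has an open neighborhood in `X` homeomorphic to `ℝ^d`. -/
def LocEuclAt {n : ℕ} (d : ℕ) (X : Set (Euc n)) (p : X) : Prop :=
  ∃ U : Set X, IsOpen U ∧ p ∈ U ∧ Nonempty (U ≃ₜ EuclideanSpace ℝ (Fin d))

/-- `p` has an open neighborhood in `X` homeomorphic to the `d`-dimensional half-space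
`[0,∞) × ℝ^{d-1}`. -/
def LocHalfAt {n : ℕ} (d : ℕ) (X : Set (Euc n)) (p : X) : Prop :=
  ∃ U : Set X, IsOpen U ∧ p ∈ U ∧
    Nonempty (U ≃ₜ ({t : ℝ // 0 ≤ t} × EuclideanSpace ℝ (Fin (d - 1))))

/-- `A` is a closed (i.e. compact and boundaryless) `d`-dimensional topological manifold. -/
def IsClosedManifold {n : ℕ} (d : ℕ) (A : Set (Euc n)) : Prop :=
  IsCompact A ∧ ∀ p : A, LocEuclAt d A p

/-- `X` is a compact `d`-dimensional topological manifold with boundary. -/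
def IsCompactMfdWithBoundary {n : ℕ} (d : ℕ) (X : Set (Euc n)) : Prop :=
  IsCompact X ∧ ∀ p : X, LocEuclAt d X p ∨ LocHalfAt d X p

/-- The boundary of a `d`-dimensional manifold with boundary `X`: the set of points having no
neighborhood homeomorphic to `ℝ^d`. -/
def mfdBoundary {n : ℕ} (d : ℕ) (X : Set (Euc n)) : Set (Euc n) :=
  {q | ∃ h : q ∈ X, ¬ LocEuclAt d X ⟨q, h⟩}

namespace CechTheory

/-- The natural map from unreduced to reduced Čech cohomology: in positive degrees it is the
inverse of the comparison isomorphism, in degree `0` it is the natural projection. -/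
def toRed {n : ℕ} {R : Type} [CommRing R] {G : Type} [AddCommGroup G] [Module R G]
    (T : CechTheory n R G) : ∀ (k : ℕ) (A : Set (Euc n)), T.H k A ⟶ T.Hred k A
  | 0, A => T.projRed A
  | (k + 1), A => (T.redIso (k + 1) (Nat.succ_pos k) A).inv

/-- The canonical subset `L^R(A) ⊆ H̃^{m-1}(A; R)` for `A` a closed `R`-orientable
`(m-1)`-manifold with components `A₁, …, A_k`: the union over `i` of the images of the sets of
`R`-module generators of `H^{m-1}(Aᵢ) ≅ R` under the natural embeddings
`H^{m-1}(Aᵢ) ↪ H^{m-1}(A) ≅ ⊕ⱼ H^{m-1}(Aⱼ)` — equivalently (as formalized here), the classes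
in `H^{m-1}(A)` restricting to a module generator on `Aᵢ` and to `0` on every other component —
transported to reduced cohomology: for `m > 1` via the comparison isomorphism, and for `m = 1`
by the projection onto `H̃⁰(A)`. -/
def LR {n : ℕ} {R : Type} [CommRing R] (T : CechTheory n R R) (m : ℕ) (A : Set (Euc n)) :
    Set (T.Hred (m - 1) A) :=
  T.toRed (m - 1) A ''
    {x : T.H (m - 1) A | ∃ p, ∃ _ : p ∈ A,
      Submodule.span R {T.resH (m - 1) (connectedComponentIn_subset A p) x} = ⊤ ∧
      ∀ q (_ : q ∈ A), connectedComponentIn A q ≠ connectedComponentIn A p →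
        T.resH (m - 1) (connectedComponentIn_subset A q) x = 0}

/-- A closed `d`-dimensional manifold `A` is `R`-orientable if and only if `H^d(C; R) ≅ R` for
every connected component `C` of `A`; this cohomological characterization of
`R`-orientability (which we take as the definition here) is valid for every commutative ring
`R`. -/
def ROrientableClosed {n : ℕ} {R : Type} [CommRing R] (T : CechTheory n R R) (d : ℕ)
    (A : Set (Euc n)) : Prop :=
  ∀ p ∈ A, Nonempty (T.H d (connectedComponentIn A p) ≃ₗ[R] R)

/-- A compact `d`-dimensional manifold `X` with boundary `B` is `R`-orientable if and only if
the relative group `H^d(C, B ∩ C; R)` is `≅ R` for every connected component `C` of `X`; this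
cohomological characterization of `R`-orientability is valid for every commutative ring `R`
and we take it as the definition here. -/
def ROrientableWithBoundary {n : ℕ} {R : Type} [CommRing R] (T : CechTheory n R R) (d : ℕ)
    (X B : Set (Euc n)) : Prop :=
  ∀ p ∈ X,
    Nonempty (T.Hpair d (connectedComponentIn X p) (B ∩ connectedComponentIn X p) ≃ₗ[R] R)

end CechTheory

/-!
A closed `d`-manifold contained in another one is relatively open, by invariance of domain. Applied
to `A i ∩ A j ⊆ A j` this makes every `A i` clopen in `A = ⋃ i, A i`, so that the connected
components of `A` are those of the `A i`. A class in `L^R(A)` is carried by one component, hence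
restricts to a class in `L^R(A i)` for some `i`; by functoriality of restriction, an extension of
it over `⋃ i, X i` would yield an extension of the latter over `X i`.

Invariance of domain is deduced from Brouwer's fixed point theorem by perturbing a continuous left
inverse (Kulpa, Tao), and Brouwer's theorem from the absence of `C¹` retractions of a ball onto its
sphere: if `f = id` on the sphere, then `∫ det (f')` is the volume of the ball (Milnor, Rogers).
-/

open scoped Topology NNReal Polynomial
open Metric

section VolumeIdentity

theorem inter_frontier_nonempty_of_isPreconnected {α : Type*} [TopologicalSpace α] {s t : Set α}
    (ht : IsPreconnected t) (hts : (t ∩ s).Nonempty) (hts' : (t \ s).Nonempty) :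
    (t ∩ frontier s).Nonempty := by
  by_contra! hempty
  obtain ⟨x, hxt, hxs⟩ := hts
  obtain ⟨y, hyt, hys⟩ := hts'
  have mem_interior_or : ∀ z ∈ t, z ∈ interior s ∨ z ∈ (closure s)ᶜ := fun z hz =>
    or_iff_not_imp_left.2 fun hzi hzc => hempty.subset ⟨hz, hzc, hzi⟩
  obtain ⟨z, -, hzi, hzc⟩ := ht _ _ isOpen_interior isClosed_closure.isOpen_compl mem_interior_or
    ⟨x, hxt, (mem_interior_or x hxt).resolve_right fun h => h (subset_closure hxs)⟩
    ⟨y, hyt, (mem_interior_or y hyt).resolve_left fun h => hys (interior_subset h)⟩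
  exact hzc (subset_closure (interior_subset hzi))

variable {E F : Type*} [NormedAddCommGroup E] [NormedAddCommGroup F]

theorem bijective_id_add_of_lipschitzWith [CompleteSpace E] {K : ℝ≥0} {u : E → E} (hK : K < 1)
    (hu : LipschitzWith K u) : Function.Bijective fun x => x + u x := by
  refine (Function.bijective_iff_existsUnique _).2 fun y => ?_
  have hcontr : ContractingWith K fun x => y - u x :=
    ⟨hK, by simpa using (LipschitzWith.const y).sub hu⟩
  have isFixedPt_iff (x : E) : Function.IsFixedPt (fun x => y - u x) x ↔ x + u x = y :=
    sub_eq_iff_eq_add.trans eq_comm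
  exact ⟨_, (isFixedPt_iff _).1 hcontr.fixedPoint_isFixedPt,
    fun x hx => hcontr.fixedPoint_unique ((isFixedPt_iff x).2 hx)⟩

theorem image_eq_self_of_eqOn_compl {α : Type*} {f : α → α} {s : Set α}
    (hf : Function.Bijective f) (hfs : EqOn f id sᶜ) : f '' s = s := by
  rw [← compl_inj_iff, ← image_compl_eq hf, hfs.image_eq, image_id]

variable [NormedSpace ℝ E]

theorem lipschitzWith_of_lipschitzOnWith_of_eq_zero {K : ℝ≥0} {f : E → F} {s : Set E}
    (hs : IsClosed s) (hf : LipschitzOnWith K f s) (hf₀ : ∀ x ∉ interior s, f x = 0) :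
    LipschitzWith K f := by
  have dist_le_of_notMem : ∀ x ∈ s, ∀ y ∉ s, dist (f x) (f y) ≤ K * dist x y := by
    intro x hx y hy
    obtain ⟨z, hz, hzs⟩ : (segment ℝ x y ∩ frontier s).Nonempty :=
      inter_frontier_nonempty_of_isPreconnected (convex_segment x y).isPreconnected
        ⟨x, left_mem_segment ℝ x y, hx⟩ ⟨y, right_mem_segment ℝ x y, hy⟩
    calc dist (f x) (f y) = dist (f x) (f z) := by
          rw [hf₀ y (mt (@interior_subset _ _ s y) hy), hf₀ z hzs.2]
      _ ≤ K * dist x z := hf.dist_le_mul x hx z (hs.frontier_subset hzs)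
      _ ≤ K * dist x y := by
          gcongr
          exact (dist_add_dist_of_mem_segment hz).symm ▸ le_add_of_nonneg_right dist_nonneg
  refine LipschitzWith.of_dist_le_mul fun x y => ?_
  by_cases hx : x ∈ s <;> by_cases hy : y ∈ s
  · exact hf.dist_le_mul x hx y hy
  · exact dist_le_of_notMem x hx y hy
  · rw [dist_comm, dist_comm x]
    exact dist_le_of_notMem y hy x hx
  · rw [hf₀ x (mt (@interior_subset _ _ s x) hx), hf₀ y (mt (@interior_subset _ _ s y) hy),
      dist_self]
    positivity

/-- Lagrange interpolation writes the value at `t` as a fixed linear combination of values at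
points of `S`, so no measurability of the coefficients of `P x` is needed. -/
theorem integral_eval_eq_of_infinite {α : Type*} [MeasurableSpace α] {μ : Measure α} {d : ℕ}
    {P : α → ℝ[X]} {q : ℝ[X]} {S : Set ℝ} (hS : S.Infinite)
    (hP : ∀ x, (P x).natDegree ≤ d) (hq : q.natDegree ≤ d)
    (hint : ∀ s ∈ S, Integrable (fun x => (P x).eval s) μ)
    (heval : ∀ s ∈ S, ∫ x, (P x).eval s ∂μ = q.eval s) (t : ℝ) :
    ∫ x, (P x).eval t ∂μ = q.eval t := by
  obtain ⟨N, hNS, hN⟩ := hS.exists_subset_card_eq (d + 1)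
  have eval_eq_sum : ∀ p : ℝ[X], p.natDegree ≤ d →
      p.eval t = ∑ s ∈ N, p.eval s * (Lagrange.basis N id s).eval t := by
    intro p hp
    have hdeg : p.degree < N.card := by
      rw [hN]
      exact Polynomial.degree_le_natDegree.trans_lt (by exact_mod_cast Nat.lt_succ_of_le hp)
    conv_lhs => rw [Lagrange.eq_interpolate (v := id) (injOn_id _) hdeg]
    simp [Lagrange.interpolate_apply, Polynomial.eval_finsetSum]
  calc ∫ x, (P x).eval t ∂μ
      = ∫ x, ∑ s ∈ N, (P x).eval s * (Lagrange.basis N id s).eval t ∂μ := by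
        simp only [fun x => eval_eq_sum (P x) (hP x)]
    _ = ∑ s ∈ N, (∫ x, (P x).eval s ∂μ) * (Lagrange.basis N id s).eval t := by
        rw [integral_finsetSum _ fun s hs => (hint s (hNS hs)).mul_const _]
        simp only [integral_mul_const]
    _ = ∑ s ∈ N, q.eval s * (Lagrange.basis N id s).eval t :=
        Finset.sum_congr rfl fun s hs => by rw [heval s (hNS hs)]
    _ = q.eval t := (eval_eq_sum q hq).symm

variable [FiniteDimensional ℝ E]

theorem det_one_add_pos_of_norm_lt_one {A : E →L[ℝ] E} (hA : ‖A‖ < 1) : 0 < (1 + A).det := by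
  have hcont : ContinuousOn (fun t : ℝ => (1 + t • A).det) (Icc 0 1) :=
    (ContinuousLinearMap.continuous_det.comp (by fun_prop)).continuousOn
  have hne : ∀ t ∈ Icc (0 : ℝ) 1, (1 + t • A).det ≠ 0 := by
    intro t ht
    have hnorm : ‖-(t • A)‖ < 1 := by
      rw [norm_neg, norm_smul, Real.norm_of_nonneg ht.1]
      exact (mul_le_of_le_one_left (norm_nonneg A) ht.2).trans_lt hA
    have hunit : IsUnit (1 + t • A) := by
      simpa using isUnit_one_sub_of_norm_lt_one hnorm
    exact ((hunit.map ContinuousLinearMap.toLinearMapRingHom).map LinearMap.det).ne_zero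
  by_contra! hle
  obtain ⟨t, ht, ht₀⟩ := intermediate_value_Icc' zero_le_one hcont
    ⟨by simpa using hle, by simp [ContinuousLinearMap.det]⟩
  exact hne t ht ht₀

variable [MeasurableSpace E] [BorelSpace E] {μ : Measure E} [μ.IsAddHaarMeasure]
  {u : E → E} {u' : E → E →L[ℝ] E} {U : Set E} {K : ℝ≥0}

/-- For `K < 1` the map `x ↦ x + u x` is a bijection of `U` with positive Jacobian. -/
theorem integral_det_one_add_of_lipschitzWith_lt_one (hK : K < 1) (hu : LipschitzWith K u)
    (hU : MeasurableSet U) (hμU : μ U ≠ ⊤) (hu₀ : ∀ x ∉ U, u x = 0)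
    (hu' : ∀ x ∈ U, HasFDerivAt u (u' x) x) :
    IntegrableOn (fun x => (1 + u' x).det) U μ ∧ ∫ x in U, (1 + u' x).det ∂μ = μ.real U := by
  have hbij := bijective_id_add_of_lipschitzWith hK hu
  have himage : (fun x => x + u x) '' U = U :=
    image_eq_self_of_eqOn_compl hbij fun x hx => by simp [hu₀ x hx]
  have hder : ∀ x ∈ U, HasFDerivWithinAt (fun x => x + u x) (1 + u' x) U x :=
    fun x hx => ((hasFDerivAt_id x).add (hu' x hx)).hasFDerivWithinAt
  have habs : EqOn (fun x => |(1 + u' x).det| • (1 : ℝ)) (fun x => (1 + u' x).det) U := by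
    intro x hx
    have hnorm : ‖u' x‖ < 1 := ((hu' x hx).le_of_lipschitz hu).trans_lt (by exact_mod_cast hK)
    simp [abs_of_pos (det_one_add_pos_of_norm_lt_one hnorm)]
  have hint := integrableOn_image_iff_integrableOn_abs_det_fderiv_smul μ hU hder
    hbij.1.injOn fun _ => (1 : ℝ)
  have hval := integral_image_eq_integral_abs_det_fderiv_smul μ hU hder
    hbij.1.injOn fun _ => (1 : ℝ)
  rw [himage] at hint hval
  refine ⟨(hint.1 (integrableOn_const hμU)).congr_fun habs hU, ?_⟩
  rw [← setIntegral_congr_fun hU habs, ← hval]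
  simp

/-- Both sides of the identity for `s⁻¹ • u`, multiplied by `s ^ dim E`, are polynomial in `s`,
and they agree for `s > K`; hence they agree for `s = 1`. -/
theorem integral_det_one_add_of_lipschitzWith (hu : LipschitzWith K u)
    (hU : MeasurableSet U) (hμU : μ U ≠ ⊤) (hu₀ : ∀ x ∉ U, u x = 0)
    (hu' : ∀ x ∈ U, HasFDerivAt u (u' x) x) :
    ∫ x in U, (1 + u' x).det ∂μ = μ.real U := by
  let P : E → ℝ[X] := fun x => LinearMap.charpoly (-(u' x : E →ₗ[ℝ] E))
  let q : ℝ[X] := Polynomial.C (μ.real U) * Polynomial.X ^ Module.finrank ℝ E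
  have eval_P (x : E) (s : ℝ) : (P x).eval s = (s • 1 + u' x).det := by
    rw [LinearMap.eval_charpoly, sub_neg_eq_add, Algebra.algebraMap_eq_smul_one]
    rfl
  have eval_P_of_pos (x : E) {s : ℝ} (hs : 0 < s) :
      (P x).eval s = s ^ Module.finrank ℝ E * (1 + s⁻¹ • u' x).det := by
    rw [eval_P, ContinuousLinearMap.det, ContinuousLinearMap.det, ← LinearMap.det_smul]
    congr 1
    ext y
    simp [hs.ne']
  have small (s : ℝ) (hs : (K : ℝ) < s) :
      IntegrableOn (fun x => (1 + s⁻¹ • u' x).det) U μ ∧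
        ∫ x in U, (1 + s⁻¹ • u' x).det ∂μ = μ.real U := by
    have hs₀ : 0 < s := K.2.trans_lt hs
    have hlt : ‖s⁻¹‖₊ * K < 1 := by
      rw [← NNReal.coe_lt_coe]
      simpa [abs_of_pos hs₀, inv_mul_lt_iff₀ hs₀] using hs
    refine integral_det_one_add_of_lipschitzWith_lt_one hlt (u := fun x => s⁻¹ • u x)
      ((lipschitzWith_smul s⁻¹).comp hu) hU hμU (fun x hx => by simp [hu₀ x hx])
      fun x hx => (hu' x hx).const_smul s⁻¹
  have hone := integral_eval_eq_of_infinite (μ := μ.restrict U) (P := P) (q := q)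
    (Ioi_infinite (K : ℝ)) (fun x => (LinearMap.charpoly_natDegree _).le)
    (Polynomial.natDegree_C_mul_X_pow_le _ _)
    (fun s hs => by
      simp only [eval_P_of_pos _ (K.2.trans_lt hs)]
      exact (small s hs).1.const_mul _)
    (fun s hs => by
      simp only [eval_P_of_pos _ (K.2.trans_lt hs)]
      rw [integral_const_mul, (small s hs).2, Polynomial.eval_C_mul, Polynomial.eval_pow,
        Polynomial.eval_X, mul_comm])
    1
  simpa [eval_P, q] using hone

theorem integral_det_fderiv_of_eqOn_sphere {f : E → E} {c : E} {r : ℝ} (hr : r ≠ 0)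
    (hf : ContDiffOn ℝ 1 f (closedBall c r)) (hid : EqOn f id (sphere c r)) :
    ∫ x in ball c r, (fderiv ℝ f x).det ∂μ = μ.real (ball c r) := by
  let u : E → E := (ball c r).indicator fun x => f x - x
  have hu_eq : EqOn u (fun x => f x - x) (closedBall c r) := by
    intro x hx
    by_cases hxb : x ∈ ball c r
    · exact indicator_of_mem hxb _
    · have hxs : x ∈ sphere c r := by
        rw [← closedBall_sdiff_ball]
        exact ⟨hx, hxb⟩
      simp [u, indicator_of_notMem hxb, hid hxs]
  have hu₀ : ∀ x ∉ ball c r, u x = 0 := fun x hx => indicator_of_notMem hx _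
  obtain ⟨K, hK⟩ := ((hf.sub contDiffOn_id).congr hu_eq).exists_lipschitzOnWith one_ne_zero
    (convex_closedBall _ _) (isCompact_closedBall _ _)
  have hlip : LipschitzWith K u := lipschitzWith_of_lipschitzOnWith_of_eq_zero isClosed_closedBall
    hK (by rwa [interior_closedBall _ hr])
  have hu' : ∀ x ∈ ball c r, HasFDerivAt u (fderiv ℝ f x - 1) x := by
    intro x hx
    have hball := isOpen_ball.mem_nhds hx
    have hdiff : DifferentiableAt ℝ f x :=
      (hf.contDiffAt (mem_of_superset hball ball_subset_closedBall)).differentiableAt one_ne_zero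
    exact (hdiff.hasFDerivAt.sub (hasFDerivAt_id x)).congr_of_eventuallyEq
      (eventually_of_mem hball fun y hy => indicator_of_mem hy _)
  simpa only [add_sub_cancel] using
    integral_det_one_add_of_lipschitzWith hlip measurableSet_ball measure_ball_lt_top.ne hu₀ hu'

end VolumeIdentity

section Brouwer

variable {E : Type*} [NormedAddCommGroup E] [InnerProductSpace ℝ E] [FiniteDimensional ℝ E]

theorem det_eq_zero_of_eventually_norm_eq {f : E → E} {f' : E →L[ℝ] E} {x : E} {r : ℝ}
    (hf : HasFDerivAt f f' x) (hr : r ≠ 0) (hnorm : ∀ᶠ y in 𝓝 x, ‖f y‖ = r) : f'.det = 0 := by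
  by_contra hdet
  have hunit : IsUnit (f' : E →ₗ[ℝ] E) :=
    LinearMap.isUnit_iff_isUnit_det _ |>.2 (isUnit_iff_ne_zero.2 hdet)
  obtain ⟨v, hv⟩ : ∃ v, f' v = f x := ((Module.End.isUnit_iff _).1 hunit).2 (f x)
  have hinner : HasFDerivAt (fun y => inner ℝ (f y) (f y)) (0 : E →L[ℝ] ℝ) x := by
    refine (hasFDerivAt_const (r ^ 2) x).congr_of_eventuallyEq ?_
    filter_upwards [hnorm] with y hy
    rw [real_inner_self_eq_norm_sq, hy]
  have hzero := DFunLike.congr_fun ((hf.inner ℝ hf).unique hinner) v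
  simp [fderivInnerCLM_apply, hv, hnorm.self_of_nhds, hr] at hzero

theorem not_exists_contDiffOn_retraction_sphere {r : ℝ} (hr : 0 < r) :
    ¬∃ ρ : E → E, ContDiffOn ℝ 1 ρ (closedBall 0 r) ∧
      MapsTo ρ (closedBall 0 r) (sphere 0 r) ∧ EqOn ρ id (sphere 0 r) := by
  rintro ⟨ρ, hρ, hmaps, hid⟩
  borelize E
  have hdet : EqOn (fun x => (fderiv ℝ ρ x).det) 0 (ball 0 r) := by
    intro x hx
    have hball := isOpen_ball.mem_nhds hx
    have hdiff : DifferentiableAt ℝ ρ x :=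
      (hρ.contDiffAt (mem_of_superset hball ball_subset_closedBall)).differentiableAt one_ne_zero
    refine det_eq_zero_of_eventually_norm_eq hdiff.hasFDerivAt hr.ne' ?_
    filter_upwards [hball] with y hy
    exact mem_sphere_zero_iff_norm.1 (hmaps (ball_subset_closedBall hy))
  have hvol : ∫ x in ball 0 r, (fderiv ℝ ρ x).det = volume.real (ball (0 : E) r) :=
    integral_det_fderiv_of_eqOn_sphere hr.ne' hρ hid
  rw [setIntegral_congr_fun measurableSet_ball hdet, integral_zero'] at hvol
  exact (ENNReal.toReal_pos (measure_ball_pos volume _ hr).ne' measure_ball_lt_top.ne).ne hvol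

theorem exists_eq_zero_of_hasCompactSupport_sub_id {h : E → E} (hcont : Continuous h)
    (hsupp : HasCompactSupport fun x => h x - x) : ∃ x, h x = 0 := by
  by_contra! hne
  obtain ⟨r, hr, hsub⟩ := hsupp.isBounded.subset_ball_lt 0 0
  obtain ⟨δ, hδ, hδh⟩ := (isCompact_closedBall (0 : E) r).exists_forall_le'
    hcont.norm.continuousOn fun x _ => norm_pos_iff.2 (hne x)
  obtain ⟨u, hu, huh, husupp⟩ := (hcont.sub continuous_id).exists_contDiff_approx 1
    (ε := fun _ => δ) continuous_const fun _ => hδ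
  let g : E → E := fun x => x + u x
  have hg : ContDiff ℝ 1 g := contDiff_id.add hu
  have hg_ne : ∀ x ∈ closedBall 0 r, g x ≠ 0 := by
    intro x hx hgx
    refine (hδh x hx).not_gt ?_
    have hux : u x = -x := eq_neg_of_add_eq_zero_right hgx
    simpa [hux, dist_comm _ (h x - x), dist_eq_norm] using huh x
  have hg_sphere : EqOn g id (sphere 0 r) := by
    intro x hx
    have hux : u x = 0 := Function.notMem_support.1 fun hxu =>
      sphere_disjoint_ball.le_bot ⟨hx, hsub (subset_tsupport _ (husupp hxu))⟩
    simp [g, hux]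
  refine not_exists_contDiffOn_retraction_sphere hr ⟨fun x => (r / ‖g x‖) • g x, ?_, ?_, ?_⟩
  · intro x hx
    exact ((contDiffAt_const.div (hg.contDiffAt.norm ℝ (hg_ne x hx))
      (norm_ne_zero_iff.2 (hg_ne x hx))).smul hg.contDiffAt).contDiffWithinAt
  · intro x hx
    rw [mem_sphere_zero_iff_norm, norm_smul, norm_div, norm_norm,
      div_mul_cancel₀ _ (norm_ne_zero_iff.2 (hg_ne x hx)), Real.norm_of_nonneg hr.le]
  · intro x hx
    simp [hg_sphere hx, mem_sphere_zero_iff_norm.1 hx, hr.ne']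

theorem exists_isFixedPt_of_closedBall (f : C(closedBall (0 : E) 1, closedBall (0 : E) 1)) :
    ∃ x, Function.IsFixedPt f x := by
  obtain ⟨F, hF⟩ := f.exists_restrict_eq isClosed_closedBall
  let χ : ContDiffBump (0 : E) := ⟨1, 2, one_pos, one_lt_two⟩
  have hsupp : HasCompactSupport fun x => (x - χ x • (F x : E)) - x := by
    simp only [sub_sub_cancel_left]
    exact (χ.hasCompactSupport.smul_right (f' := fun x => (F x : E))).neg
  obtain ⟨x, hx⟩ := exists_eq_zero_of_hasCompactSupport_sub_id
    (by have := χ.continuous; fun_prop) hsupp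
  have hxF : x = χ x • (F x : E) := sub_eq_zero.1 hx
  have hx1 : x ∈ closedBall 0 1 := by
    rw [mem_closedBall_zero_iff, hxF, norm_smul, Real.norm_of_nonneg χ.nonneg]
    exact mul_le_one₀ χ.le_one (norm_nonneg _) (mem_closedBall_zero_iff.1 (F x).2)
  refine ⟨⟨x, hx1⟩, Subtype.ext ?_⟩
  rw [χ.one_of_mem_closedBall hx1, one_smul] at hxF
  rw [← hF]
  exact hxF.symm

theorem exists_eq_zero_of_norm_sub_id_le_one {h : E → E} (hcont : ContinuousOn h (closedBall 0 1))
    (hle : ∀ x ∈ closedBall 0 1, ‖h x - x‖ ≤ 1) : ∃ x ∈ closedBall 0 1, h x = 0 := by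
  have hmaps : MapsTo (fun x => x - h x) (closedBall 0 1) (closedBall 0 1) := fun x hx => by
    rw [mem_closedBall_zero_iff, norm_sub_rev]
    exact hle x hx
  obtain ⟨x, hx⟩ := exists_isFixedPt_of_closedBall
    ⟨hmaps.restrict _ _ _, (continuousOn_id.sub hcont).mapsToRestrict hmaps⟩
  exact ⟨x, x.2, sub_eq_self.1 (congrArg Subtype.val hx)⟩

end Brouwer

section RadialPush

variable {E : Type*} [NormedAddCommGroup E] [NormedSpace ℝ E] {c y : E} {ε : ℝ}

/-- Radial projection away from the centre `c`: points closer to `c` than `ε` are moved to the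
sphere of radius `ε` about `c`, and all others are fixed. The value at `c` itself is `c`. -/
def radialPush (c : E) (ε : ℝ) (y : E) : E := c + max (ε / ‖y - c‖) 1 • (y - c)

theorem radialPush_of_notMem_ball (hy : y ∉ ball c ε) : radialPush c ε y = y := by
  rw [mem_ball_iff_norm, not_lt] at hy
  simp [radialPush, max_eq_right (div_le_one_of_le₀ hy (norm_nonneg _))]

theorem radialPush_mem_sphere (hyc : y ≠ c) (hy : y ∈ ball c ε) :
    radialPush c ε y ∈ sphere c ε := by
  have hpos : 0 < ‖y - c‖ := norm_pos_iff.2 (sub_ne_zero.2 hyc)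
  have hlt : ‖y - c‖ < ε := mem_ball_iff_norm.1 hy
  rw [mem_sphere_iff_norm, radialPush, add_sub_cancel_left,
    max_eq_left ((one_le_div hpos).2 hlt.le), norm_smul, norm_div, norm_norm,
    div_mul_cancel₀ _ hpos.ne', Real.norm_of_nonneg (hpos.trans hlt).le]

theorem continuousOn_radialPush : ContinuousOn (radialPush c ε) {c}ᶜ := by
  have hne : ∀ y ∈ ({c}ᶜ : Set E), ‖y - c‖ ≠ 0 := fun y hy => norm_ne_zero_iff.2 (sub_ne_zero.2 hy)
  unfold radialPush
  fun_prop (disch := assumption)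

end RadialPush

section ZeroAvoidance

variable {E : Type*} [NormedAddCommGroup E] [NormedSpace ℝ E] [FiniteDimensional ℝ E]
  {G : E → E} {K : Set E} {η : ℝ}

/-- A smooth approximation maps the null set `S` to a null set, so that a small translation of it
avoids `0` on `S`. -/
theorem exists_continuous_ne_zero_approx [MeasurableSpace E] [BorelSpace E] (μ : Measure E)
    [μ.IsAddHaarMeasure] {S : Set E} (hG : Continuous G) (hK : IsCompact K)
    (hGK : ∀ y ∈ K, G y ≠ 0) (hS : μ S = 0) (hη : 0 < η) :
    ∃ Q : E → E, Continuous Q ∧ (∀ y, ‖Q y - G y‖ < η) ∧ ∀ y ∈ K ∪ S, Q y ≠ 0 := by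
  obtain ⟨δ, hδ, hδG⟩ := hK.exists_forall_le' hG.norm.continuousOn
    fun y hy => norm_pos_iff.2 (hGK y hy)
  have hmin : 0 < min δ η := lt_min hδ hη
  obtain ⟨P, hP, hPG, -⟩ := hG.exists_contDiff_approx 1 (ε := fun _ => min δ η / 2)
    continuous_const fun _ => half_pos hmin
  have hPS : μ (P '' S) = 0 := addHaar_image_eq_zero_of_differentiableOn_of_addHaar_eq_zero μ
    (hP.differentiable one_ne_zero).differentiableOn hS
  obtain ⟨a, ha, haS⟩ : (ball 0 (min δ η / 2) \ P '' S).Nonempty := by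
    by_contra! hempty
    exact (measure_ball_pos μ 0 (half_pos hmin)).ne'
      (measure_mono_null (sdiff_eq_empty.1 hempty) hPS)
  have hQG : ∀ y, ‖(P y - a) - G y‖ < min δ η := by
    intro y
    calc ‖(P y - a) - G y‖ = ‖(P y - G y) - a‖ := by rw [sub_right_comm]
      _ ≤ ‖P y - G y‖ + ‖a‖ := norm_sub_le _ _
      _ < min δ η / 2 + min δ η / 2 :=
        add_lt_add (by simpa [dist_eq_norm] using hPG y) (mem_ball_zero_iff.1 ha)
      _ = min δ η := add_halves _
  refine ⟨fun y => P y - a, hP.continuous.sub continuous_const,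
    fun y => (hQG y).trans_le (min_le_right _ _), ?_⟩
  rintro y (hy | hy) hQy
  · have hlt := (hQG y).trans_le (min_le_left _ _)
    rw [show P y - a = 0 from hQy, zero_sub, norm_neg] at hlt
    exact (hδG y hy).not_gt hlt
  · exact haS ⟨y, hy, sub_eq_zero.1 hQy⟩

/-- Zeros of `G` in the ball about `c` are removed by pushing that ball, punctured at `c`, onto its
boundary sphere, a null set on which `G` can be perturbed away from `0`. -/
theorem exists_continuousOn_ne_zero_approx {c : E} {ε : ℝ} (hG : Continuous G) (hK : IsCompact K)
    (hc : c ∉ K) (hε : 0 < ε) (hη : 0 < η) (hGK : ∀ y ∈ K \ ball c ε, G y ≠ 0)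
    (hGc : ∀ y ∈ closedBall c ε, ‖G y‖ ≤ η) :
    ∃ H : E → E, ContinuousOn H K ∧ (∀ y ∈ K, ‖H y - G y‖ ≤ 3 * η) ∧ ∀ y ∈ K, H y ≠ 0 := by
  borelize E
  obtain ⟨Q, hQ, hQG, hQ_ne⟩ := exists_continuous_ne_zero_approx Measure.addHaar hG
    (hK.diff isOpen_ball) hGK (Measure.addHaar_sphere_of_ne_zero Measure.addHaar c hε.ne') hη
  have hKc : ∀ y ∈ K, y ≠ c := fun y hy hyc => hc (hyc ▸ hy)
  refine ⟨Q ∘ radialPush c ε, hQ.comp_continuousOn (continuousOn_radialPush.mono hKc),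
    fun y hy => ?_, fun y hy => hQ_ne _ ?_⟩
  · by_cases hball : y ∈ ball c ε
    · have hG_push := hGc _ (sphere_subset_closedBall (radialPush_mem_sphere (hKc y hy) hball))
      calc ‖Q (radialPush c ε y) - G y‖
          ≤ ‖Q (radialPush c ε y) - G (radialPush c ε y)‖ + ‖G (radialPush c ε y) - G y‖ :=
            norm_sub_le_norm_sub_add_norm_sub _ _ _
        _ ≤ η + (η + η) := add_le_add (hQG _).le (norm_sub_le_of_le hG_push
            (hGc y (ball_subset_closedBall hball)))
        _ = 3 * η := by ring
    · rw [Function.comp_apply, radialPush_of_notMem_ball hball]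
      linarith [hQG y]
  · by_cases hball : y ∈ ball c ε
    · exact .inr (radialPush_mem_sphere (hKc y hy) hball)
    · rw [radialPush_of_notMem_ball hball]
      exact .inl ⟨hy, hball⟩

end ZeroAvoidance

section InvarianceOfDomain

theorem exists_continuous_leftInvOn {E Y : Type*} [NormedAddCommGroup E] [NormedSpace ℝ E]
    [FiniteDimensional ℝ E] [TopologicalSpace Y] [T4Space Y] {f : E → Y} {s : Set E}
    (hs : IsCompact s) (hf : ContinuousOn f s) (hinj : InjOn f s) :
    ∃ g : Y → E, Continuous g ∧ LeftInvOn g f s := by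
  have : CompactSpace s := isCompact_iff_compactSpace.1 hs
  have hemb : Topology.IsClosedEmbedding (s.domRestrict f) :=
    (continuousOn_iff_continuous_domRestrict.1 hf).isClosedEmbedding (injOn_iff_injective.1 hinj)
  have : TietzeExtension E := TietzeExtension.of_tvs ℝ
  obtain ⟨g, hg⟩ := ContinuousMap.exists_extension' hemb ⟨Subtype.val, continuous_subtype_val⟩
  exact ⟨g, g.continuous, fun x hx => congrFun hg ⟨x, hx⟩⟩

variable {E : Type*} [NormedAddCommGroup E] [InnerProductSpace ℝ E] [FiniteDimensional ℝ E]
  {f : E → E}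

/-- If `f 0` were a boundary point of the image, a continuous left inverse of `f` could be
perturbed to have no zero on the image, contradicting Brouwer's theorem on the ball. -/
theorem image_closedBall_mem_nhds_of_injOn (hf : ContinuousOn f (closedBall 0 1))
    (hinj : InjOn f (closedBall 0 1)) : f '' closedBall 0 1 ∈ 𝓝 (f 0) := by
  by_contra hnot
  have hball : IsCompact (closedBall (0 : E) 1) := isCompact_closedBall 0 1
  obtain ⟨G, hG, hGf⟩ := exists_continuous_leftInvOn hball hf hinj
  have hG₀ : G (f 0) = 0 := hGf (mem_closedBall_self zero_le_one)
  obtain ⟨ε, hε, hGε⟩ := Metric.continuousAt_iff.1 (hG.continuousAt (x := f 0)) (1 / 3)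
    (by norm_num)
  obtain ⟨c, hcε, hc⟩ : (ball (f 0) (ε / 2) \ f '' closedBall 0 1).Nonempty :=
    not_subset.1 fun hsub => hnot (mem_of_superset (ball_mem_nhds _ (half_pos hε)) hsub)
  have hG_ne : ∀ y ∈ f '' closedBall 0 1 \ ball c (ε / 2), G y ≠ 0 := by
    rintro - ⟨⟨x, hx, rfl⟩, hxc⟩ hGx
    rw [hGf hx] at hGx
    exact hxc (by rwa [hGx, mem_ball_comm])
  have hG_le : ∀ y ∈ closedBall c (ε / 2), ‖G y‖ ≤ 1 / 3 := by
    intro y hy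
    have hdist : dist y (f 0) < ε := calc
      dist y (f 0) ≤ dist y c + dist c (f 0) := dist_triangle _ _ _
      _ < ε / 2 + ε / 2 := add_lt_add_of_le_of_lt hy hcε
      _ = ε := add_halves ε
    simpa [hG₀] using (hGε hdist).le
  obtain ⟨H, hH, hHG, hH_ne⟩ := exists_continuousOn_ne_zero_approx hG
    (hball.image_of_continuousOn hf) hc (half_pos hε) (by norm_num) hG_ne hG_le
  obtain ⟨x, hx, hHx⟩ := exists_eq_zero_of_norm_sub_id_le_one
    (hH.comp hf (mapsTo_image f _)) fun x hx => by
      simpa [hGf hx] using hHG (f x) (mem_image_of_mem f hx)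
  exact hH_ne (f x) (mem_image_of_mem f hx) hHx

theorem image_mem_nhds_of_injOn {s : Set E} {x : E} (hs : s ∈ 𝓝 x) (hf : ContinuousOn f s)
    (hinj : InjOn f s) : f '' s ∈ 𝓝 (f x) := by
  obtain ⟨r, hr, hrs⟩ := Metric.nhds_basis_closedBall.mem_iff.1 hs
  let scale : E → E := fun y => x + r • y
  have hmaps : MapsTo scale (closedBall 0 1) s := by
    intro y hy
    refine hrs (mem_closedBall_iff_norm.2 ?_)
    simpa [scale, norm_smul, abs_of_pos hr, hr] using hy
  have hscale : Function.Injective scale :=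
    (add_right_injective x).comp (smul_right_injective E hr.ne')
  have himage := image_closedBall_mem_nhds_of_injOn (f := f ∘ scale)
    (hf.comp (by fun_prop) hmaps) (hinj.comp hscale.injOn hmaps)
  rw [image_comp] at himage
  simpa [scale] using mem_of_superset himage (image_mono hmaps.image_subset)

theorem range_mem_nhds_of_injective {Y : Type*} [TopologicalSpace Y] {g : E → Y}
    (hg : Continuous g) (hinj : Function.Injective g) (κ : OpenPartialHomeomorph Y E) {x : E}
    (hx : g x ∈ κ.source) : range g ∈ 𝓝 (g x) := by
  have hs : g ⁻¹' κ.source ∈ 𝓝 x := hg.continuousAt.preimage_mem_nhds (κ.open_source.mem_nhds hx)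
  have himage : (κ ∘ g) '' (g ⁻¹' κ.source) ∈ 𝓝 (κ (g x)) := image_mem_nhds_of_injOn hs
    (κ.continuousOn.comp hg.continuousOn (mapsTo_preimage _ _))
    (κ.injOn.comp hinj.injOn (mapsTo_preimage _ _))
  filter_upwards [κ.continuousAt hx himage, κ.open_source.mem_nhds hx] with y hy hysource
  obtain ⟨z, hz, hzy⟩ := hy
  exact ⟨z, κ.injOn hz hysource hzy⟩

end InvarianceOfDomain

section RelativelyClopen

variable {α : Type*} [TopologicalSpace α]

theorem connectedComponentIn_eq_of_isClopen {M N : Set α} (hMN : M ⊆ N)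
    (hM : IsClopen ((↑) ⁻¹' M : Set N)) {p : α} (hp : p ∈ M) :
    connectedComponentIn N p = connectedComponentIn M p := by
  refine Subset.antisymm ?_ (connectedComponentIn_mono p hMN)
  refine isPreconnected_connectedComponentIn.subset_connectedComponentIn
    (mem_connectedComponentIn (hMN hp)) ?_
  rw [connectedComponentIn_eq_image (hMN hp), image_subset_iff]
  exact hM.connectedComponent_subset hp

theorem isClopen_preimage_iUnion_of_mem_nhdsWithin {ι : Type*} [Finite ι] {A : ι → Set α}
    (hclosed : ∀ i, IsClosed (A i)) (hnhds : ∀ i j, ∀ p ∈ A i ∩ A j, A i ∈ 𝓝[A j] p) (i : ι) :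
    IsClopen ((↑) ⁻¹' A i : Set (⋃ j, A j)) := by
  refine ⟨(hclosed i).preimage continuous_subtype_val, isOpen_iff_mem_nhds.2 ?_⟩
  rintro ⟨p, hp⟩ hpi
  rw [preimage_coe_mem_nhds_subtype, nhdsWithin_iUnion, mem_iSup]
  intro j
  by_cases hpj : p ∈ A j
  · exact hnhds i j p ⟨hpi, hpj⟩
  · rw [notMem_closure_iff_nhdsWithin_eq_bot.1 ((hclosed j).closure_eq.symm ▸ hpj)]
    exact mem_bot

end RelativelyClopen

section Manifolds

variable {n d : ℕ} {M N : Set (Euc n)}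

theorem LocEuclAt.exists_openPartialHomeomorph {p : N} (hN : LocEuclAt d N p) :
    ∃ κ : OpenPartialHomeomorph N (Euc d), p ∈ κ.source := by
  obtain ⟨U, hU, hp, ⟨φ⟩⟩ := hN
  let coe : OpenPartialHomeomorph U N :=
    TopologicalSpace.Opens.openPartialHomeomorphSubtypeCoe ⟨U, hU⟩ ⟨⟨p, hp⟩⟩
  exact ⟨coe.symm.trans φ.toOpenPartialHomeomorph, by simpa [coe] using hp⟩

theorem LocEuclAt.mem_nhdsWithin (hMN : M ⊆ N) {p : M} (hM : LocEuclAt d M p)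
    (hN : LocEuclAt d N (inclusion hMN p)) : M ∈ 𝓝[N] (p : Euc n) := by
  obtain ⟨U, -, hp, ⟨φ⟩⟩ := hM
  obtain ⟨κ, hκ⟩ := hN.exists_openPartialHomeomorph
  let g : Euc d → N := fun x => inclusion hMN (φ.symm x)
  have hg : Continuous g := by
    have := continuous_inclusion hMN
    fun_prop
  have hinj : Function.Injective g :=
    (inclusion_injective hMN).comp (Subtype.val_injective.comp φ.symm.injective)
  have hgp : g (φ ⟨p, hp⟩) = inclusion hMN p := by simp [g]
  have hrange : range g ∈ 𝓝 (inclusion hMN p) := by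
    rw [← hgp] at hκ ⊢
    exact range_mem_nhds_of_injective hg hinj κ hκ
  rw [← coe_inclusion hMN p, ← preimage_coe_mem_nhds_subtype]
  refine mem_of_superset hrange ?_
  rintro - ⟨x, rfl⟩
  exact (φ.symm x : M).2

theorem LocEuclAt.of_isOpen_preimage (hMN : M ⊆ N) (hopen : IsOpen ((↑) ⁻¹' M : Set N)) {p : M}
    (hM : LocEuclAt d M p) : LocEuclAt d N (inclusion hMN p) := by
  obtain ⟨U, hU, hp, ⟨φ⟩⟩ := hM
  have hemb := Topology.IsOpenEmbedding.inclusion hMN hopen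
  exact ⟨inclusion hMN '' U, hemb.isOpenMap U hU, mem_image_of_mem _ hp,
    ⟨(hemb.isEmbedding.homeomorphImage U).symm.trans φ⟩⟩

variable {ι : Type*} [Finite ι] {A : ι → Set (Euc n)}

theorem IsClosedManifold.isClopen_preimage_iUnion (hA : ∀ i, IsClosedManifold d (A i))
    (hinter : ∀ i j, (A i ∩ A j).Nonempty → IsClosedManifold d (A i ∩ A j)) (i : ι) :
    IsClopen ((↑) ⁻¹' A i : Set (⋃ j, A j)) := by
  refine isClopen_preimage_iUnion_of_mem_nhdsWithin (fun i => (hA i).1.isClosed)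
    (fun i j p hp => ?_) i
  have hmem : A i ∩ A j ∈ 𝓝[A j] p := LocEuclAt.mem_nhdsWithin (p := ⟨p, hp⟩) inter_subset_right
    ((hinter i j ⟨p, hp⟩).2 _) ((hA j).2 _)
  exact mem_of_superset hmem inter_subset_left

theorem IsClosedManifold.iUnion (hA : ∀ i, IsClosedManifold d (A i))
    (hopen : ∀ i, IsOpen ((↑) ⁻¹' A i : Set (⋃ j, A j))) : IsClosedManifold d (⋃ i, A i) := by
  refine ⟨isCompact_iUnion fun i => (hA i).1, fun ⟨p, hp⟩ => ?_⟩
  obtain ⟨i, hi⟩ := mem_iUnion.1 hp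
  exact ((hA i).2 ⟨p, hi⟩).of_isOpen_preimage (subset_iUnion A i) (hopen i)

end Manifolds

namespace CechTheory

section Restriction

variable {n : ℕ} {R : Type} [CommRing R] {G : Type} [AddCommGroup G] [Module R G]
  (T : CechTheory n R G) (k : ℕ) {A B C : Set (Euc n)}

theorem res_res (hAB : A ⊆ B) (hBC : B ⊆ C) (x : T.Hred k C) :
    T.res k hAB (T.res k hBC x) = T.res k (hAB.trans hBC) x :=
  (ConcreteCategory.congr_hom (T.mapRed_comp k ⟨inclusion hAB, continuous_inclusion hAB⟩
    ⟨inclusion hBC, continuous_inclusion hBC⟩) x).symm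

theorem resH_resH (hAB : A ⊆ B) (hBC : B ⊆ C) (x : T.H k C) :
    T.resH k hAB (T.resH k hBC x) = T.resH k (hAB.trans hBC) x :=
  (ConcreteCategory.congr_hom (T.map_comp k ⟨inclusion hAB, continuous_inclusion hAB⟩
    ⟨inclusion hBC, continuous_inclusion hBC⟩) x).symm

theorem toRed_comp_res (hAB : A ⊆ B) : T.toRed k B ≫ T.res k hAB = T.resH k hAB ≫ T.toRed k A := by
  cases k with
  | zero => exact (T.projRed_natural _).symm
  | succ k =>
    rw [toRed, toRed, Iso.inv_comp_eq, ← Category.assoc, Iso.eq_comp_inv]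
    exact T.redIso_natural (k + 1) k.succ_pos _

theorem res_toRed (hAB : A ⊆ B) (x : T.H k B) :
    T.res k hAB (T.toRed k B x) = T.toRed k A (T.resH k hAB x) :=
  ConcreteCategory.congr_hom (T.toRed_comp_res k hAB) x

theorem resH_congr (P : ∀ D, T.H k D → Prop) (hAB : A = B) (hAC : A ⊆ C) (hBC : B ⊆ C)
    (x : T.H k C) : P A (T.resH k hAC x) ↔ P B (T.resH k hBC x) := by
  subst hAB
  rfl

end Restriction

section Gluing

variable {n m : ℕ} {R : Type} [CommRing R] (T : CechTheory n R R)

theorem exists_res_mem_LR {A : Set (Euc n)} {x : T.Hred (m - 1) A} (hx : x ∈ T.LR m A) :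
    ∃ p ∈ A, ∀ (B : Set (Euc n)) (hBA : B ⊆ A), IsClopen ((↑) ⁻¹' B : Set A) → p ∈ B →
      T.res (m - 1) hBA x ∈ T.LR m B := by
  obtain ⟨x, ⟨p, hpA, hgen, hzero⟩, rfl⟩ := hx
  refine ⟨p, hpA, fun B hBA hclopen hpB => ?_⟩
  have component_eq : ∀ q ∈ B, connectedComponentIn A q = connectedComponentIn B q :=
    fun q => connectedComponentIn_eq_of_isClopen hBA hclopen
  refine ⟨T.resH (m - 1) hBA x, ⟨p, hpB, ?_, fun q hqB hqp => ?_⟩, (T.res_toRed _ hBA x).symm⟩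
  · rw [resH_resH]
    exact (T.resH_congr _ (fun D y => Submodule.span R {y} = ⊤) (component_eq p hpB) _ _ x).1 hgen
  · rw [resH_resH]
    refine (T.resH_congr _ (fun D y => y = 0) (component_eq q hqB) _ _ x).1 (hzero q (hBA hqB) ?_)
    rwa [component_eq q hqB, component_eq p hpB]

variable {ι : Type*} {A : ι → Set (Euc n)}

theorem rOrientableClosed_iUnion {d : ℕ} (hA : ∀ i, T.ROrientableClosed d (A i))
    (hclopen : ∀ i, IsClopen ((↑) ⁻¹' A i : Set (⋃ j, A j))) :
    T.ROrientableClosed d (⋃ i, A i) := by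
  intro p hp
  obtain ⟨i, hi⟩ := mem_iUnion.1 hp
  rw [connectedComponentIn_eq_of_isClopen (subset_iUnion A i) (hclopen i) hi]
  exact hA i p hi

/-- An extension to `⋃ i, X i` of a class in `L^R(⋃ i, A i)` restricts to an extension to some
`X i` of a class in `L^R(A i)`. -/
theorem isSurface_iUnion {X : ι → Set (Euc n)}
    (hX : ∀ i, T.IsSurface m (A i) (X i) (T.LR m (A i)))
    (hclopen : ∀ i, IsClopen ((↑) ⁻¹' A i : Set (⋃ j, A j))) :
    T.IsSurface m (⋃ i, A i) (⋃ i, X i) (T.LR m (⋃ i, A i)) := by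
  refine ⟨iUnion_mono fun i => (hX i).1, ?_⟩
  rintro _ hx ⟨y, rfl⟩
  obtain ⟨p, hp, hres⟩ := T.exists_res_mem_LR hx
  obtain ⟨i, hi⟩ := mem_iUnion.1 hp
  obtain ⟨hAX, hnot⟩ := hX i
  refine hnot _ (hres (A i) (subset_iUnion A i) (hclopen i) hi)
    ⟨T.res (m - 1) (subset_iUnion X i) y, ?_⟩
  rw [res_res, res_res]

end Gluing

end CechTheory

/-- gluing.  Let `G = R`.  Suppose `A = A₁ ∪ ⋯ ∪ A_k` where the `Aᵢ` are
`(m-1)`-dimensional closed `R`-orientable topological manifolds, and every non-empty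
intersection of the `Aᵢ`'s is again an `(m-1)`-dimensional closed manifold (equivalently,
every connected component of `A` is contained in some `Aᵢ`).  Then `A` is an
`(m-1)`-dimensional closed `R`-orientable manifold, and if each `Xᵢ` is a surface with
coboundary `⊇ L^R(Aᵢ)` then `X = X₁ ∪ ⋯ ∪ X_k` is a surface with coboundary `⊇ L^R(A)`. -/
theorem stmt19 {n : ℕ} {R : Type} [CommRing R]
    (T : CechTheory n R R) (m k : ℕ) (hm : 1 ≤ m) (hmn : m ≤ n)
    (A : Set (Euc n)) (A' : Fin k → Set (Euc n)) (hA : A = ⋃ i, A' i)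
    (hA'mfd : ∀ i, IsClosedManifold (m - 1) (A' i))
    (hA'or : ∀ i, T.ROrientableClosed (m - 1) (A' i))
    (hinter : ∀ S : Finset (Fin k), S.Nonempty → (⋂ i ∈ S, A' i).Nonempty →
      IsClosedManifold (m - 1) (⋂ i ∈ S, A' i))
    (X' : Fin k → Set (Euc n))
    (hX' : ∀ i, T.IsSurface m (A' i) (X' i) (T.LR m (A' i))) :
    IsClosedManifold (m - 1) A ∧ T.ROrientableClosed (m - 1) A ∧
      T.IsSurface m A (⋃ i, X' i) (T.LR m A) := by
  have hclopen : ∀ i, IsClopen ((↑) ⁻¹' A' i : Set (⋃ j, A' j)) := by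
    refine IsClosedManifold.isClopen_preimage_iUnion hA'mfd fun i j hne => ?_
    have hpair : ⋂ l ∈ ({i, j} : Finset (Fin k)), A' l = A' i ∩ A' j := by simp
    rw [← hpair] at hne ⊢
    exact hinter {i, j} (Finset.insert_nonempty i {j}) hne
  subst hA
  exact ⟨IsClosedManifold.iUnion hA'mfd fun i => (hclopen i).isOpen,
    T.rOrientableClosed_iUnion hA'or hclopen, T.isSurface_iUnion hX' hclopen⟩
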